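/- In the Coxeter group W of type E6, for all integers i, j, k with 1 ≤ i < j < k ≤ 4, the identity x'_{6,i} · x'_{5,j} · x_{4,k} · x'_{6,k} = x4 · x'_{6,i} · x'_{5,j} · x_{4,k} · x'_{6,k+1} holds. -/

import Mathlib

/-- The descending product `x i * x (i-1) * ... * x j` (equal to `1` when `j > i`). -/
def descProd {G : Type*} [Group G] (x : ℤ → G) (i j : ℤ) : G :=
  ((List.range (i + 1 - j).toNat).map (fun n => x (i - (n : ℤ)))).prod

/-- The product `x i * x (i-2) * x (i-3) * ... * x j`, with the conventions
`primProd x i (i-1) = x i` and `primProd x i j = 1` for `j ≥ i`. -/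
def primProd {G : Type*} [Group G] (x : ℤ → G) (i j : ℤ) : G :=
  if i ≤ j then 1 else x i * descProd x (i - 2) j

/-!
Let `y = x 6`, which braids with `x 4` and commutes with all the other generators. In the type `A`
chain `x 1, …, x 4` one has `x_{3,k} x_{4,k} = x_{4,k} x_{4,k+1}`, so the right factor
`x_{4,k} y x_{4,k} = x 4 y (x_{3,k} x_{4,k})` equals `(x 4 y x 4) x_{3,k} x_{4,k+1}`, and it begins
with `x 4 y x 4 = y x 4 y`. Its first letter `y` moves left through everything that separates it
from `y x 4`, and there `y x 4 y = x 4 y x 4` produces the `x 4` at the front.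
-/

section Products

variable {G : Type*} [Group G] {x : ℤ → G}

-- In `descProd` the list is elaborated over `ℤ`, as a monadic cast of `List.range`.
theorem descProd_eq_prod_map_range (i j : ℤ) :
    descProd x i j = ((List.range (i + 1 - j).toNat).map fun n : ℕ => x (i - n)).prod := by
  simp [descProd, ← List.map_eq_flatMap, Function.comp_def]

theorem descProd_of_lt {i j : ℤ} (h : i < j) : descProd x i j = 1 := by
  have hlen : (i + 1 - j).toNat = 0 := by lia
  simp [descProd_eq_prod_map_range, hlen]

theorem descProd_eq_mul_sub_one {i j : ℤ} (h : j ≤ i) :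
    descProd x i j = x i * descProd x (i - 1) j := by
  have hlen : (i + 1 - j).toNat = (i - 1 + 1 - j).toNat + 1 := by lia
  have hindex (n : ℕ) : i - ((n + 1 : ℕ) : ℤ) = i - 1 - n := by lia
  simp only [descProd_eq_prod_map_range, hlen, List.range_succ_eq_map, List.map_cons, List.map_map,
    List.prod_cons, Function.comp_def, Nat.succ_eq_add_one, hindex, Nat.cast_zero, sub_zero]

theorem descProd_add_one {i j : ℤ} (h : j ≤ i + 1) :
    descProd x (i + 1) j = x (i + 1) * descProd x i j := by
  rw [descProd_eq_mul_sub_one h, add_sub_cancel_right]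

theorem commute_descProd {g : G} {i j : ℤ} (h : ∀ l, j ≤ l → l ≤ i → Commute g (x l)) :
    Commute g (descProd x i j) := by
  rw [descProd_eq_prod_map_range]
  refine Commute.list_prod_right _ _ fun z hz => ?_
  obtain ⟨n, hn, rfl⟩ := List.mem_map.mp hz
  rw [List.mem_range] at hn
  exact h _ (by lia) (by lia)

theorem primProd_of_lt {i j : ℤ} (h : j < i) : primProd x i j = x i * descProd x (i - 2) j :=
  if_neg h.not_ge

theorem commute_primProd {g : G} {i j : ℤ} (htop : Commute g (x i))
    (h : ∀ l, j ≤ l → l ≤ i - 2 → Commute g (x l)) : Commute g (primProd x i j) := by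
  rcases le_or_gt i j with hij | hij
  · simp [primProd, hij]
  · rw [primProd_of_lt hij]
    exact htop.mul_right (commute_descProd h)

end Products

section Braid

variable {G : Type*} [Group G] {x : ℤ → G} {k m : ℤ}

/-- The elements `x k, x (k+1), ..., x m` satisfy the braid and commutation relations of the Artin
group of type `A`. -/
structure IsBraidChain (x : ℤ → G) (k m : ℤ) : Prop where
  braid : ∀ ⦃l : ℤ⦄, k ≤ l → l < m → x (l + 1) * x l * x (l + 1) = x l * x (l + 1) * x l
  commute : ∀ ⦃l r : ℤ⦄, k ≤ l → l + 1 < r → r ≤ m → Commute (x r) (x l)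

theorem IsBraidChain.mono {k' m' : ℤ} (hx : IsBraidChain x k m) (hk : k ≤ k') (hm : m' ≤ m) :
    IsBraidChain x k' m' where
  braid _ hl hlm := hx.braid (hk.trans hl) (hlm.trans_le hm)
  commute _ _ hl hlr hr := hx.commute (hk.trans hl) hlr (hr.trans hm)

theorem descProd_sub_one_mul_descProd (hkm : k ≤ m) (hx : IsBraidChain x k m) :
    descProd x (m - 1) k * descProd x m k = descProd x m k * descProd x m (k + 1) := by
  induction m, hkm using Int.leInduction with
  | base => rw [descProd_of_lt (sub_one_lt k), descProd_of_lt (lt_add_one k), one_mul, mul_one]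
  | succ m hkm ih =>
    have hshift : descProd x (m - 1) k * descProd x m k = descProd x m k * descProd x m (k + 1) :=
      ih (hx.mono le_rfl (by lia))
    have hfar : Commute (x (m + 1)) (descProd x (m - 1) k) :=
      commute_descProd fun l hl hlm => hx.commute hl (by lia) le_rfl
    have htop : descProd x m k = x m * descProd x (m - 1) k := descProd_eq_mul_sub_one hkm
    rw [add_sub_cancel_right, descProd_add_one (j := k) (by lia),
      descProd_add_one (j := k + 1) (by lia)]
    calc descProd x m k * (x (m + 1) * descProd x m k)
        = x m * (descProd x (m - 1) k * x (m + 1)) * descProd x m k := by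
          simp only [htop, mul_assoc]
      _ = x m * x (m + 1) * (descProd x (m - 1) k * descProd x m k) := by
          simp only [← hfar.eq, mul_assoc]
      _ = x m * x (m + 1) * x m * descProd x (m - 1) k * descProd x m (k + 1) := by
          rw [hshift, htop]; simp only [mul_assoc]
      _ = x (m + 1) * x m * (x (m + 1) * descProd x (m - 1) k) * descProd x m (k + 1) := by
          rw [← hx.braid hkm (lt_add_one m)]; simp only [mul_assoc]
      _ = x (m + 1) * descProd x m k * (x (m + 1) * descProd x m (k + 1)) := by
          rw [hfar.eq, htop]; simp only [mul_assoc]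

theorem mul_mul_braid_of_commute {y z g : G} (hyz : y * z * y = z * y * z) (hg : Commute y g) :
    y * z * g * (z * y * z) = z * (y * z * g) * (z * y) :=
  calc y * z * g * (z * y * z) = y * z * (g * y) * (z * y) := by
        rw [← hyz]; simp only [mul_assoc]
    _ = y * z * y * g * (z * y) := by rw [← hg.eq]; simp only [mul_assoc]
    _ = z * (y * z * g) * (z * y) := by rw [hyz]; simp only [mul_assoc]

theorem descProd_mul_mul_descProd {y : G} (hkm : k ≤ m) (hx : IsBraidChain x k m)
    (hy : ∀ l, k ≤ l → l < m → Commute y (x l)) :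
    descProd x m k * y * descProd x m k =
      x m * y * x m * descProd x (m - 1) k * descProd x m (k + 1) := by
  have hyk : Commute y (descProd x (m - 1) k) :=
    commute_descProd fun l hl hlm => hy l hl (by lia)
  have htop : descProd x m k = x m * descProd x (m - 1) k := descProd_eq_mul_sub_one hkm
  calc descProd x m k * y * descProd x m k
      = x m * (descProd x (m - 1) k * y) * descProd x m k := by
        simp only [htop, mul_assoc]
    _ = x m * y * (descProd x (m - 1) k * descProd x m k) := by
        simp only [← hyk.eq, mul_assoc]
    _ = x m * y * x m * descProd x (m - 1) k * descProd x m (k + 1) := by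
        rw [descProd_sub_one_mul_descProd hkm hx, htop]; simp only [mul_assoc]

theorem mul_descProd_mul_eq_mul_mul_descProd_mul {y g : G} {i : ℤ} (him : i ≤ m) (hkm : k ≤ m)
    (hx : IsBraidChain x k m) (hym : y * x m * y = x m * y * x m)
    (hy : ∀ l, min i k ≤ l → l < m → Commute y (x l)) (hg : Commute y g) :
    y * descProd x m i * g * (descProd x m k * y * descProd x m k) =
      x m * (y * descProd x m i * g) * (descProd x m k * y * descProd x m (k + 1)) := by
  have hyi : Commute y (descProd x (m - 1) i) :=
    commute_descProd fun l hl hlm => hy l (by lia) (by lia)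
  have hyk : Commute y (descProd x (m - 1) k) :=
    commute_descProd fun l hl hlm => hy l (by lia) (by lia)
  have htop {j : ℤ} (hj : j ≤ m) : descProd x m j = x m * descProd x (m - 1) j :=
    descProd_eq_mul_sub_one hj
  have hleft : y * descProd x m i * g = y * x m * (descProd x (m - 1) i * g) := by
    simp only [htop him, mul_assoc]
  calc y * descProd x m i * g * (descProd x m k * y * descProd x m k)
      = y * x m * (descProd x (m - 1) i * g) * (x m * y * x m) *
          (descProd x (m - 1) k * descProd x m (k + 1)) := by
        rw [hleft, descProd_mul_mul_descProd hkm hx fun l hl => hy l (by lia)]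
        simp only [mul_assoc]
    _ = x m * (y * descProd x m i * g) *
          (x m * (y * descProd x (m - 1) k) * descProd x m (k + 1)) := by
        rw [hleft, mul_mul_braid_of_commute hym (hyi.mul_right hg)]; simp only [mul_assoc]
    _ = x m * (y * descProd x m i * g) * (descProd x m k * y * descProd x m (k + 1)) := by
        rw [hyk.eq, htop hkm]; simp only [mul_assoc]

end Braid

theorem E6_lambda_general {G : Type*} [Group G] {x : ℤ → G}
    (hbraid : ∀ i : ℤ, 1 ≤ i → i ≤ 3 → x (i + 1) * x i * x (i + 1) = x i * x (i + 1) * x i)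
    (h64 : x 6 * x 4 * x 6 = x 4 * x 6 * x 4)
    (hcomm : ∀ i j : ℤ, 1 ≤ j → j + 1 < i → i ≤ 4 → x i * x j = x j * x i)
    (hcomm6 : ∀ i : ℤ, 1 ≤ i → i ≤ 6 → i ≠ 4 → i ≠ 6 → x 6 * x i = x i * x 6)
    {i j k : ℤ} (hi : 1 ≤ i) (hi4 : i ≤ 4) (hj : 1 ≤ j) (hk : 1 ≤ k) (hk4 : k ≤ 4) :
    primProd x 6 i * primProd x 5 j * descProd x 4 k * primProd x 6 k =
      x 4 * primProd x 6 i * primProd x 5 j * descProd x 4 k * primProd x 6 (k + 1) := by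
  have hchain : IsBraidChain x 1 4 :=
    ⟨fun l hl hl4 => hbraid l hl (by lia), fun l r hl hlr hr => hcomm r l hl hlr hr⟩
  have h6 (l : ℤ) (hl : 1 ≤ l) (hl3 : l ≤ 3) : Commute (x 6) (x l) :=
    hcomm6 l hl (by lia) (by lia) (by lia)
  have hmiddle : Commute (x 6) (primProd x 5 j) :=
    commute_primProd (hcomm6 5 (by lia) (by lia) (by lia) (by lia))
      fun l hl hl3 => h6 l (by lia) (by lia)
  have hprim {l : ℤ} (hl : l < 6) : primProd x 6 l = x 6 * descProd x 4 l := primProd_of_lt hl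
  have hmain := mul_descProd_mul_eq_mul_mul_descProd_mul hi4 hk4
    (hchain.mono hk le_rfl) h64
    (fun l hl hl4 => h6 l (by lia) (by lia)) hmiddle
  rw [hprim (l := i) (by lia), hprim (l := k) (by lia), hprim (l := k + 1) (by lia)]
  simpa only [mul_assoc] using hmain

theorem E6_lambda (G : Type*) [Group G] (x : ℤ → G)
    (hsq : ∀ i : ℤ, 1 ≤ i → i ≤ 6 → x i ^ 2 = 1)
    (hbraid : ∀ i : ℤ, 1 ≤ i → i ≤ 3 → x (i+1) * x i * x (i+1) = x i * x (i+1) * x i)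
    (h53 : x 5 * x 3 * x 5 = x 3 * x 5 * x 3)
    (h64 : x 6 * x 4 * x 6 = x 4 * x 6 * x 4)
    (hcomm : ∀ i j : ℤ, 1 ≤ j → j + 1 < i → i ≤ 4 → x i * x j = x j * x i)
    (hcomm5 : ∀ i : ℤ, 1 ≤ i → i ≤ 6 → i ≠ 3 → i ≠ 5 → x 5 * x i = x i * x 5)
    (hcomm6 : ∀ i : ℤ, 1 ≤ i → i ≤ 6 → i ≠ 4 → i ≠ 6 → x 6 * x i = x i * x 6) :
    ∀ i j k : ℤ, 1 ≤ i → i < j → j < k → k ≤ 4 →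
      primProd x 6 i * primProd x 5 j * descProd x 4 k * primProd x 6 k =
      x 4 * primProd x 6 i * primProd x 5 j * descProd x 4 k * primProd x 6 (k+1) := by
  intro i j k hi hij hjk hk
  exact E6_lambda_general hbraid h64 hcomm hcomm6 hi (by lia) (by lia) (by lia) hk
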